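/- Let F ∈ ℂ[x,y,s,t] be an irreducible polynomial of total degree δ such that none of F_x, F_y, F_s, F_t is identically zero, and let 𝒯, 𝒮 be its exceptional sets. Let 𝒯' ⊇ 𝒯 and 𝒮' ⊇ 𝒮 be subsets of ℂ², each the union of an algebraic curve of degree at most D and a finite set of at most δ² points. Let A, B, C, D₀ ⊂ ℂ be finite sets, set Π := (A×B)\𝒮' and let Γ be the multiset {γ_{c,d} : (c,d) ∈ (C×D₀)\𝒯'}. Then |Z(F) ∩ (A×B×C×D₀)| ≤ I(Π,Γ) + c·(|A||B| + |C||D₀| + |A||C| + |A||D₀| + |B||C| + |B||D₀|), where c is a constant depending only (polynomially) on δ and D, and I(Π,Γ) denotes the number of incidences between Π and Γ counted with the multiplicity of the curves. -/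

import Mathlib

open MvPolynomial

noncomputable section

attribute [local instance] Classical.propDecidable

def ev4 (F : MvPolynomial (Fin 4) ℂ) (x y s t : ℂ) : ℂ := eval ![x, y, s, t] F

def ev2 (g : MvPolynomial (Fin 2) ℂ) (p : ℂ × ℂ) : ℂ := eval ![p.1, p.2] g

def TT (F : MvPolynomial (Fin 4) ℂ) : Set (ℂ × ℂ) :=
  {q : ℂ × ℂ | ∀ x y : ℂ, ev4 F x y q.1 q.2 = 0}

def SS (F : MvPolynomial (Fin 4) ℂ) : Set (ℂ × ℂ) :=
  {p : ℂ × ℂ | ∀ s t : ℂ, ev4 F p.1 p.2 s t = 0}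

/-- `X` is the union of an algebraic curve of degree at most `D` and at most `k` points. -/
def IsCurvePlusPoints (X : Set (ℂ × ℂ)) (D k : ℕ) : Prop :=
  ∃ (g : MvPolynomial (Fin 2) ℂ) (P : Finset (ℂ × ℂ)), g ≠ 0 ∧ g.totalDegree ≤ D ∧
    P.card ≤ k ∧ X = {p : ℂ × ℂ | ev2 g p = 0} ∪ ↑P

/-!
Only the points of `𝒮'` and `𝒯'` cause an error. If `F(a, b, ·)` vanishes identically, then so
does `F_s(a, b, ·)`, since differentiating in `s` commutes with fixing `(a, b)`. As `F` is
irreducible and `F_s` is nonzero of smaller degree, eliminating the first variable from `F` and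
`F_s` leaves a nonzero polynomial `r` of degree at most `2δ²` for which `r(b, ·)` vanishes
identically. So `b`, and likewise `a`, takes at most `2δ²` values, and `F(a, b, ·)` vanishes
identically for at most `4δ⁴` points `(a, b)`; each of them lies under at most `|C||D₀|` zeros.
Every other point of `𝒮' ∩ (A × B)` lies under at most `δ(|C| + |D₀|)` zeros by Schwartz–Zippel,
which also bounds the number of these points by `(D + δ²)(|A| + |B|)`. The argument for `𝒯'` is
symmetric.
-/

open Finset Matrix

open scoped Polynomial

section Degree

lemma totalDegree_pderiv_lt {R σ : Type*} [CommSemiring R] {f : MvPolynomial σ R} {i : σ}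
    (h : pderiv i f ≠ 0) : (pderiv i f).totalDegree < f.totalDegree := by
  obtain ⟨m, hm, hdeg⟩ := exists_mem_eq_sup _ (support_nonempty.2 h) fun m => m.sum fun _ e => e
  have hm' : m + Finsupp.single i 1 ∈ f.support := by
    rw [mem_support_iff, coeff_pderiv] at hm
    exact mem_support_iff.2 (left_ne_zero_of_mul hm)
  calc (pderiv i f).totalDegree = m.sum fun _ e => e := hdeg
    _ < (m + Finsupp.single i 1).sum fun _ e => e := by
      rw [Finsupp.sum_add_index' (fun _ => rfl) (fun _ _ _ => rfl)]
      simp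
    _ ≤ f.totalDegree := le_totalDegree hm'

lemma not_dvd_pderiv {R σ : Type*} [CommRing R] [IsDomain R] {f : MvPolynomial σ R} {i : σ}
    (h : pderiv i f ≠ 0) : ¬ f ∣ pderiv i f := fun hdvd =>
  (totalDegree_le_of_dvd_of_isDomain hdvd h).not_gt (totalDegree_pderiv_lt h)

lemma totalDegree_aeval_le {R σ τ : Type*} [CommSemiring R] {v : σ → MvPolynomial τ R}
    (hv : ∀ i, (v i).totalDegree ≤ 1) (f : MvPolynomial σ R) :
    (aeval v f).totalDegree ≤ f.totalDegree := by
  rw [aeval_def, eval₂_eq]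
  refine totalDegree_finsetSum_le fun m hm => ?_
  calc (algebraMap R (MvPolynomial τ R) (coeff m f) * ∏ i ∈ m.support, v i ^ m i).totalDegree
      ≤ (∏ i ∈ m.support, v i ^ m i).totalDegree := by
        rw [← Algebra.smul_def]
        exact totalDegree_smul_le _ _
    _ ≤ ∑ i ∈ m.support, (v i ^ m i).totalDegree := totalDegree_finsetProd _ _
    _ ≤ ∑ i ∈ m.support, m i := sum_le_sum fun i _ =>
        (totalDegree_pow _ _).trans (mul_le_of_le_one_right' (hv i))
    _ ≤ f.totalDegree := le_totalDegree hm

end Degree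

section Elimination

lemma resultant_ne_zero_of_irreducible_of_not_dvd {R : Type*} [CommRing R] [IsDomain R]
    [IsGCDMonoid R] {P Q : R[X]} (hP : Irreducible P) (hP0 : P.natDegree ≠ 0) (hPQ : ¬ P ∣ Q) :
    P.resultant Q ≠ 0 := by
  let φ := algebraMap R (FractionRing R)
  have hφ : Function.Injective φ := IsFractionRing.injective _ _
  have hprim : P.IsPrimitive := hP.isPrimitive hP0
  have hirr : Irreducible (P.map φ) := hprim.irreducible_iff_irreducible_map_fraction_map.1 hP
  have hndvd : ¬ P.map φ ∣ Q.map φ :=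
    mt (hprim.dvd_iff_fraction_map_dvd_fraction_map (FractionRing R)).2 hPQ
  have hres := Polynomial.resultant_ne_zero _ _ (hirr.coprime_iff_not_dvd.2 hndvd)
  rw [Polynomial.natDegree_map_eq_of_injective hφ, Polynomial.natDegree_map_eq_of_injective hφ,
    Polynomial.resultant_map_map] at hres
  exact ne_zero_of_map hres

lemma totalDegree_resultant_le {R σ : Type*} [CommRing R] {f g : (MvPolynomial σ R)[X]} {d : ℕ}
    (hf : ∀ i, (f.coeff i).totalDegree ≤ d) (hg : ∀ i, (g.coeff i).totalDegree ≤ d) (m n : ℕ) :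
    (f.resultant g m n).totalDegree ≤ (m + n) * d := by
  have hentry (i j : Fin (m + n)) : (f.sylvester g m n i j).totalDegree ≤ d := by
    induction j using Fin.addCases <;>
      simp only [Polynomial.sylvester, of_apply, Fin.addCases_left, Fin.addCases_right] <;>
      split_ifs <;> simp [hf, hg]
  rw [Polynomial.resultant, det_apply]
  refine totalDegree_finsetSum_le fun τ _ => ?_
  calc (Equiv.Perm.sign τ • ∏ j, f.sylvester g m n (τ j) j).totalDegree
      ≤ (∏ j, f.sylvester g m n (τ j) j).totalDegree := totalDegree_smul_le _ _
    _ ≤ ∑ j, (f.sylvester g m n (τ j) j).totalDegree := totalDegree_finsetProd _ _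
    _ ≤ ∑ _j : Fin (m + n), d := sum_le_sum fun j _ => hentry _ _
    _ = (m + n) * d := by simp

lemma totalDegree_coeff_finSuccEquiv_le {R : Type*} [CommSemiring R] {n : ℕ}
    (f : MvPolynomial (Fin (n + 1)) R) (i : ℕ) :
    ((finSuccEquiv R n f).coeff i).totalDegree ≤ f.totalDegree := by
  by_cases h : (finSuccEquiv R n f).coeff i = 0
  · simp [h]
  · exact le_of_add_le_left (totalDegree_coeff_finSuccEquiv_add_le f i h)

lemma natDegree_finSuccEquiv_le_totalDegree {R : Type*} [CommSemiring R] {n : ℕ}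
    (f : MvPolynomial (Fin (n + 1)) R) : (finSuccEquiv R n f).natDegree ≤ f.totalDegree :=
  (natDegree_finSuccEquiv f).trans_le (degreeOf_le_totalDegree f 0)

lemma finSuccEquiv_rename_succ {R : Type*} [CommSemiring R] {n : ℕ} (f : MvPolynomial (Fin n) R) :
    finSuccEquiv R n (rename Fin.succ f) = Polynomial.C f := by
  induction f using MvPolynomial.induction_on with
  | C a => simp [finSuccEquiv_apply]
  | add f g hf hg => simp [hf, hg]
  | mul_X f i hf => simp [hf, finSuccEquiv_X_succ]

variable {K : Type*} [Field K] {n : ℕ}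

lemma exists_eliminant {p f : MvPolynomial (Fin (n + 1)) K} {d : ℕ} (hp : Irreducible p)
    (hpf : ¬ p ∣ f) (hpd : p.totalDegree ≤ d) (hfd : f.totalDegree ≤ d) :
    ∃ r : MvPolynomial (Fin n) K, r ≠ 0 ∧ r.totalDegree ≤ 2 * d ^ 2 ∧
      rename Fin.succ r ∈ Ideal.span {p, f} := by
  set e := finSuccEquiv K n
  have hP : Irreducible (e p) := (MulEquiv.irreducible_iff e).2 hp
  by_cases h0 : (e p).natDegree = 0
  · have hC : e p = Polynomial.C ((e p).coeff 0) := Polynomial.eq_C_of_natDegree_eq_zero h0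
    have hpr : rename Fin.succ ((e p).coeff 0) = p :=
      e.injective ((finSuccEquiv_rename_succ _).trans hC.symm)
    refine ⟨(e p).coeff 0, fun h => hP.ne_zero (by rw [hC, h, map_zero]), ?_, ?_⟩
    · exact (totalDegree_coeff_finSuccEquiv_le p 0).trans (by nlinarith)
    · exact hpr.symm ▸ Ideal.subset_span (Set.mem_insert _ _)
  · refine ⟨(e p).resultant (e f), resultant_ne_zero_of_irreducible_of_not_dvd hP h0
      (by rwa [map_dvd_iff]), ?_, ?_⟩
    · calc ((e p).resultant (e f)).totalDegree
          ≤ ((e p).natDegree + (e f).natDegree) * d := totalDegree_resultant_le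
            (fun i => (totalDegree_coeff_finSuccEquiv_le p i).trans hpd)
            (fun i => (totalDegree_coeff_finSuccEquiv_le f i).trans hfd) _ _
        _ ≤ (d + d) * d := by
            gcongr
            exacts [(natDegree_finSuccEquiv_le_totalDegree p).trans hpd,
              (natDegree_finSuccEquiv_le_totalDegree f).trans hfd]
        _ = 2 * d ^ 2 := by ring
    · obtain ⟨a, b, -, -, hab⟩ := Polynomial.exists_mul_add_mul_eq_C_resultant
        (e p) (e f) le_rfl le_rfl (Or.inl h0)
      refine Ideal.mem_span_pair.2 ⟨e.symm a, e.symm b, e.injective ?_⟩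
      rw [finSuccEquiv_rename_succ, ← hab]
      simp [mul_comm]

end Elimination

section Specialization

variable {K : Type*} [Field K] {n : ℕ}

lemma card_le_totalDegree_of_aeval_vecCons_eq_zero {r : MvPolynomial (Fin (n + 1)) K} (hr : r ≠ 0)
    (Z : Finset K)
    (hZ : ∀ a ∈ Z, aeval (vecCons (C a) X : Fin (n + 1) → MvPolynomial (Fin n) K) r = 0) :
    #Z ≤ r.totalDegree := by
  have hroot (a : K) : (finSuccEquiv K n r).eval (C a) =
      aeval (vecCons (C a) X : Fin (n + 1) → MvPolynomial (Fin n) K) r := by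
    let evalC : (MvPolynomial (Fin n) K)[X] →ₐ[K] MvPolynomial (Fin n) K :=
      (Polynomial.aeval (C a)).restrictScalars K
    refine DFunLike.congr_fun (f := evalC.comp (finSuccEquiv K n).toAlgHom)
      (algHom_ext fun j => ?_) r
    cases j using Fin.cases <;> simp [evalC, finSuccEquiv_X_zero, finSuccEquiv_X_succ]
  have hsub : Z.image C ⊆ (finSuccEquiv K n r).roots.toFinset := by
    intro c hc
    obtain ⟨a, ha, rfl⟩ := mem_image.1 hc
    rw [Multiset.mem_toFinset, Polynomial.mem_roots (by simpa using hr), Polynomial.IsRoot, hroot,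
      hZ a ha]
  calc #Z = #(Z.image C) := (card_image_of_injective _ (C_injective _ _)).symm
    _ ≤ #(finSuccEquiv K n r).roots.toFinset := card_le_card hsub
    _ ≤ (finSuccEquiv K n r).natDegree :=
      (Multiset.toFinset_card_le _).trans (Polynomial.card_roots' _)
    _ ≤ r.totalDegree := natDegree_finSuccEquiv_le_totalDegree r

/-- The polynomial `F(p.1, p.2, ·)`. When `F` has four variables, its zero set is the dual curve
`γ*_p`, and it vanishes identically exactly when `p` is in the exceptional set `𝒮`. -/
def fiberPoly (p : K × K) : MvPolynomial (Fin (n + 2)) K →ₐ[K] MvPolynomial (Fin n) K :=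
  aeval (vecCons (C p.1) (vecCons (C p.2) X))

lemma totalDegree_fiberPoly_le (p : K × K) (F : MvPolynomial (Fin (n + 2)) K) :
    (fiberPoly p F).totalDegree ≤ F.totalDegree :=
  totalDegree_aeval_le (Fin.cases (by simp) (Fin.cases (by simp) fun i => by simp)) F

lemma pderiv_fiberPoly (p : K × K) (i : Fin n) (F : MvPolynomial (Fin (n + 2)) K) :
    pderiv i (fiberPoly p F) = fiberPoly p (pderiv i.succ.succ F) := by
  induction F using MvPolynomial.induction_on with
  | C a => simp [fiberPoly]
  | add f g hf hg => simp only [map_add, hf, hg]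
  | mul_X f j hf =>
    have hX : pderiv i (fiberPoly p (X j)) = fiberPoly p (pderiv i.succ.succ (X j)) := by
      induction j using Fin.cases with
      | zero => simp [fiberPoly, pderiv_X_of_ne (Fin.succ_ne_zero i.succ).symm]
      | succ j =>
        induction j using Fin.cases with
        | zero => simp [fiberPoly, pderiv_X_of_ne (Fin.succ_succ_ne_one i).symm]
        | succ j => simp [fiberPoly, pderiv_X, Pi.single_apply, apply_ite]
    simp only [map_mul, pderiv_mul, map_add, hf, hX]

lemma fiberPoly_rename_swap (p : K × K) (F : MvPolynomial (Fin (n + 2)) K) :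
    fiberPoly p.swap (rename (Equiv.swap 0 1) F) = fiberPoly p F := by
  simp only [fiberPoly, aeval_rename]
  congr 2
  refine funext (Fin.cases (by simp) (Fin.cases (by simp) fun j => ?_))
  simp [Equiv.swap_apply_of_ne_of_ne, Fin.ext_iff]

lemma pderiv_rename_swap (i : Fin n) (F : MvPolynomial (Fin (n + 2)) K) :
    pderiv i.succ.succ (rename (Equiv.swap 0 1) F) =
      rename (Equiv.swap 0 1) (pderiv i.succ.succ F) := by
  have hfix : Equiv.swap 0 1 i.succ.succ = i.succ.succ :=
    Equiv.swap_apply_of_ne_of_ne (Fin.succ_ne_zero _) (Fin.succ_succ_ne_one i)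
  simpa only [hfix] using pderiv_rename (Equiv.swap 0 1).injective i.succ.succ F

lemma card_image_snd_le_of_fiberPoly_eq_zero {F : MvPolynomial (Fin (n + 2)) K}
    (hF : Irreducible F) {i : Fin n} (hi : pderiv i.succ.succ F ≠ 0) {P : Finset (K × K)}
    (hP : ∀ p ∈ P, fiberPoly p F = 0) : #(P.image Prod.snd) ≤ 2 * F.totalDegree ^ 2 := by
  obtain ⟨r, hr, hrdeg, hrmem⟩ := exists_eliminant hF (not_dvd_pderiv hi) le_rfl
    (totalDegree_pderiv_lt hi).le
  refine (card_le_totalDegree_of_aeval_vecCons_eq_zero hr _ fun b hb => ?_).trans hrdeg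
  obtain ⟨p, hp, rfl⟩ := mem_image.1 hb
  obtain ⟨u, v, huv⟩ := Ideal.mem_span_pair.1 hrmem
  calc aeval (vecCons (C p.2) X) r = fiberPoly p (rename Fin.succ r) := by
        rw [fiberPoly, aeval_rename]; rfl
    _ = 0 := by simp [← huv, ← pderiv_fiberPoly, hP p hp]

lemma card_le_of_fiberPoly_eq_zero {F : MvPolynomial (Fin (n + 2)) K}
    (hF : Irreducible F) {i : Fin n} (hi : pderiv i.succ.succ F ≠ 0) {P : Finset (K × K)}
    (hP : ∀ p ∈ P, fiberPoly p F = 0) : #P ≤ 4 * F.totalDegree ^ 4 := by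
  let F' := rename (Equiv.swap 0 1) F
  have hF' : Irreducible F' := (MulEquiv.irreducible_iff (renameEquiv K (Equiv.swap 0 1))).2 hF
  have hi' : pderiv i.succ.succ F' ≠ 0 := by
    rw [pderiv_rename_swap]
    exact (rename_injective _ (Equiv.injective _)).ne hi
  have hdeg : F'.totalDegree = F.totalDegree := totalDegree_renameEquiv (Equiv.swap 0 1) F
  have hsnd : #(P.image Prod.snd) ≤ 2 * F.totalDegree ^ 2 :=
    card_image_snd_le_of_fiberPoly_eq_zero hF hi hP
  have hfst : #(P.image Prod.fst) ≤ 2 * F.totalDegree ^ 2 := by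
    have h := card_image_snd_le_of_fiberPoly_eq_zero (P := P.image Prod.swap) hF' hi'
      (forall_mem_image.2 fun p hp => (fiberPoly_rename_swap p F).trans (hP p hp))
    rwa [image_image, hdeg] at h
  calc #P ≤ #(P.image Prod.fst ×ˢ P.image Prod.snd) := card_le_card subset_product
    _ ≤ (2 * F.totalDegree ^ 2) * (2 * F.totalDegree ^ 2) := by
      rw [card_product]
      gcongr
    _ = 4 * F.totalDegree ^ 4 := by ring

end Specialization

section Counting

lemma card_filter_eval_eq_zero_le {R : Type*} [CommRing R] [IsDomain R]
    {g : MvPolynomial (Fin 2) R} (hg : g ≠ 0) (A B : Finset R) :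
    #{p ∈ A ×ˢ B | eval ![p.1, p.2] g = 0} ≤ g.totalDegree * (#A + #B) := by
  rcases A.eq_empty_or_nonempty with rfl | hA
  · simp
  rcases B.eq_empty_or_nonempty with rfl | hB
  · simp
  have hA0 : (#A : ℚ≥0) ≠ 0 := by exact_mod_cast hA.card_ne_zero
  have hB0 : (#B : ℚ≥0) ≠ 0 := by exact_mod_cast hB.card_ne_zero
  have hcard : #{p ∈ A ×ˢ B | eval ![p.1, p.2] g = 0} ≤
      #{v ∈ Fintype.piFinset ![A, B] | eval v g = 0} := by
    refine card_le_card_of_injOn (fun p => ![p.1, p.2]) (fun p hp => ?_) fun p _ q _ hpq =>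
      Prod.ext (congrFun hpq 0) (congrFun hpq 1)
    simp only [coe_filter, mem_product, Set.mem_ofPred_eq] at hp
    simpa [Fin.forall_fin_two] using hp
  have hSZ : (#{v ∈ Fintype.piFinset ![A, B] | eval v g = 0} : ℚ≥0) / (#A * #B) ≤
      g.degreeOf 0 / #A + g.degreeOf 1 / #B := by
    simpa [Fin.prod_univ_two, Fin.sum_univ_two] using schwartz_zippel_sum_degreeOf hg ![A, B]
  have hbound : (#{p ∈ A ×ˢ B | eval ![p.1, p.2] g = 0} : ℚ≥0) ≤ g.totalDegree * (#A + #B) :=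
    calc (#{p ∈ A ×ˢ B | eval ![p.1, p.2] g = 0} : ℚ≥0)
        ≤ #{v ∈ Fintype.piFinset ![A, B] | eval v g = 0} := mod_cast hcard
      _ ≤ (g.degreeOf 0 / #A + g.degreeOf 1 / #B) * (#A * #B) :=
        (div_le_iff₀ (by positivity)).1 hSZ
      _ ≤ (g.totalDegree / #A + g.totalDegree / #B) * (#A * #B) := by
        gcongr <;> exact degreeOf_le_totalDegree g _
      _ = g.totalDegree * (#A + #B) := by field_simp; ring
  exact_mod_cast hbound

lemma IsCurvePlusPoints.card_filter_mem_le {T : Set (ℂ × ℂ)} {D k : ℕ}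
    (hT : IsCurvePlusPoints T D k) (A B : Finset ℂ) :
    #{p ∈ A ×ˢ B | p ∈ T} ≤ (D + k) * (#A + #B) := by
  rcases A.eq_empty_or_nonempty with rfl | hA
  · simp
  obtain ⟨g, P, hg, hgD, hP, hTeq⟩ := hT
  have hsub : {p ∈ A ×ˢ B | p ∈ T} ⊆ {p ∈ A ×ˢ B | eval ![p.1, p.2] g = 0} ∪ P := by
    intro p hp
    rw [mem_filter, hTeq] at hp
    rw [mem_union, mem_filter]
    exact hp.2.imp (fun h => ⟨hp.1, h⟩) id
  calc #{p ∈ A ×ˢ B | p ∈ T}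
      ≤ #{p ∈ A ×ˢ B | eval ![p.1, p.2] g = 0} + #P :=
        (card_le_card hsub).trans (card_union_le _ _)
    _ ≤ D * (#A + #B) + k * (#A + #B) := by
        gcongr
        · exact (card_filter_eval_eq_zero_le hg A B).trans (Nat.mul_le_mul_right _ hgD)
        · exact hP.trans (Nat.le_mul_of_pos_right k (Nat.add_pos_left hA.card_pos _))
    _ = (D + k) * (#A + #B) := (add_mul D k _).symm

lemma card_filter_product_le {α β : Type*} (P : Finset α) (Q : Finset β) (r : α → β → Prop)
    (s : Set α) (t : Set β) :
    #{z ∈ P ×ˢ Q | r z.1 z.2} ≤ ∑ q ∈ Q with q ∉ t, #{p ∈ P | p ∉ s ∧ r p q} +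
      (∑ q ∈ Q with q ∈ t, #{p ∈ P | r p q} + ∑ p ∈ P with p ∈ s, #{q ∈ Q | r p q}) := by
  calc #{z ∈ P ×ˢ Q | r z.1 z.2}
      ≤ #({z ∈ P ×ˢ Q | z.2 ∉ t ∧ z.1 ∉ s ∧ r z.1 z.2} ∪
          ({z ∈ P ×ˢ Q | z.2 ∈ t ∧ r z.1 z.2} ∪ {z ∈ P ×ˢ Q | z.1 ∈ s ∧ r z.1 z.2})) := by
        refine card_le_card fun z hz => ?_
        simp only [mem_union, mem_filter] at hz ⊢
        tauto
    _ ≤ #{z ∈ P ×ˢ Q | z.2 ∉ t ∧ z.1 ∉ s ∧ r z.1 z.2} +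
          (#{z ∈ P ×ˢ Q | z.2 ∈ t ∧ r z.1 z.2} + #{z ∈ P ×ˢ Q | z.1 ∈ s ∧ r z.1 z.2}) :=
        (card_union_le _ _).trans (Nat.add_le_add_left (card_union_le _ _) _)
    _ = _ := by
        congr 2
        · simp only [card_filter, sum_product_right, sum_filter, ite_and, sum_ite_irrel,
            sum_const_zero]
        · simp only [card_filter, sum_product_right, sum_filter, ite_and, sum_ite_irrel,
            sum_const_zero]
        · simp only [card_filter, sum_product, sum_filter, ite_and, sum_ite_irrel, sum_const_zero]

variable {K : Type*} [Field K]

lemma eval_fiberPoly (F : MvPolynomial (Fin 4) K) (p q : K × K) :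
    eval ![q.1, q.2] (fiberPoly p F) = eval ![p.1, p.2, q.1, q.2] F := by
  refine DFunLike.congr_fun (f := (eval ![q.1, q.2]).comp (fiberPoly p).toRingHom)
    (ringHom_ext (fun a => ?_) fun i => ?_) F
  · simp [fiberPoly]
  · fin_cases i <;> simp [fiberPoly]

lemma sum_card_filter_eval_snd_le {F : MvPolynomial (Fin 4) K} (hF : Irreducible F)
    (hst : ∃ j : Fin 2, pderiv j.succ.succ F ≠ 0) (P : Finset (K × K)) (C D : Finset K) :
    ∑ p ∈ P, #{q ∈ C ×ˢ D | eval ![p.1, p.2, q.1, q.2] F = 0} ≤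
      4 * F.totalDegree ^ 4 * (#C * #D) + #P * (F.totalDegree * (#C + #D)) := by
  obtain ⟨j, hj⟩ := hst
  rw [← sum_filter_add_sum_filter_not P fun p => fiberPoly p F = 0]
  gcongr ?_ + ?_
  · calc ∑ p ∈ P with fiberPoly p F = 0, #{q ∈ C ×ˢ D | eval ![p.1, p.2, q.1, q.2] F = 0}
        ≤ #{p ∈ P | fiberPoly p F = 0} * (#C * #D) := sum_le_card_nsmul _ _ _ fun p _ =>
          (card_filter_le _ _).trans_eq (card_product C D)
      _ ≤ 4 * F.totalDegree ^ 4 * (#C * #D) := by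
        gcongr
        exact card_le_of_fiberPoly_eq_zero hF hj fun p hp => (mem_filter.1 hp).2
  · have hfiber (p : K × K) (hp : fiberPoly p F ≠ 0) :
        #{q ∈ C ×ˢ D | eval ![p.1, p.2, q.1, q.2] F = 0} ≤ F.totalDegree * (#C + #D) := by
      simp only [← eval_fiberPoly]
      exact (card_filter_eval_eq_zero_le hp C D).trans
        (Nat.mul_le_mul_right _ (totalDegree_fiberPoly_le p F))
    calc ∑ p ∈ P with fiberPoly p F ≠ 0, #{q ∈ C ×ˢ D | eval ![p.1, p.2, q.1, q.2] F = 0}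
        ≤ #{p ∈ P | fiberPoly p F ≠ 0} * (F.totalDegree * (#C + #D)) :=
          sum_le_card_nsmul _ _ _ fun p hp => hfiber p (mem_filter.1 hp).2
      _ ≤ #P * (F.totalDegree * (#C + #D)) := by
        gcongr
        exact filter_subset _ _

/-- The polynomial `F(s, t, x, y)`, in which the two pairs of variables are interchanged. It
exchanges the roles of `𝒮` and `𝒯`. -/
def swapPairs : MvPolynomial (Fin 4) K ≃ₐ[K] MvPolynomial (Fin 4) K :=
  renameEquiv K (Equiv.addRight 2)

lemma eval_swapPairs (F : MvPolynomial (Fin 4) K) (x y s t : K) :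
    eval ![s, t, x, y] (swapPairs F) = eval ![x, y, s, t] F := by
  simp only [swapPairs, renameEquiv_apply, eval_rename]
  congr 2
  funext i
  fin_cases i <;> rfl

lemma pderiv_swapPairs (i : Fin 4) (F : MvPolynomial (Fin 4) K) :
    pderiv (i + 2) (swapPairs F) = swapPairs (pderiv i F) :=
  pderiv_rename (Equiv.addRight (2 : Fin 4)).injective i F

lemma sum_card_filter_eval_fst_le {F : MvPolynomial (Fin 4) K} (hF : Irreducible F)
    (hxy : pderiv 0 F ≠ 0 ∨ pderiv 1 F ≠ 0) (Q : Finset (K × K)) (A B : Finset K) :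
    ∑ q ∈ Q, #{p ∈ A ×ˢ B | eval ![p.1, p.2, q.1, q.2] F = 0} ≤
      4 * F.totalDegree ^ 4 * (#A * #B) + #Q * (F.totalDegree * (#A + #B)) := by
  have hdeg : (swapPairs F).totalDegree = F.totalDegree := totalDegree_renameEquiv _ F
  have hst : ∃ j : Fin 2, pderiv j.succ.succ (swapPairs F) ≠ 0 := by
    refine Fin.exists_fin_two.2 (hxy.imp ?_ ?_) <;> intro h
    · exact (pderiv_swapPairs 0 F).trans_ne (by simpa using h)
    · exact (pderiv_swapPairs 1 F).trans_ne (by simpa using h)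
  simpa only [eval_swapPairs, hdeg] using
    sum_card_filter_eval_snd_le ((MulEquiv.irreducible_iff swapPairs).2 hF) hst Q A B

end Counting

theorem zeros_le_incidences_plus_error_general {K : Type*} [Field K]
    {F : MvPolynomial (Fin 4) K} (hF : Irreducible F)
    (hxy : pderiv 0 F ≠ 0 ∨ pderiv 1 F ≠ 0) (hst : pderiv 2 F ≠ 0 ∨ pderiv 3 F ≠ 0)
    {T' S' : Set (K × K)} {m : ℕ} {A B C D₀ : Finset K}
    (hT : #{q ∈ C ×ˢ D₀ | q ∈ T'} ≤ m * (#C + #D₀))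
    (hS : #{p ∈ A ×ˢ B | p ∈ S'} ≤ m * (#A + #B)) :
    #{q ∈ A ×ˢ B ×ˢ C ×ˢ D₀ | eval ![q.1, q.2.1, q.2.2.1, q.2.2.2] F = 0} ≤
      ∑ q ∈ C ×ˢ D₀ with q ∉ T',
        #{p ∈ A ×ˢ B | p ∉ S' ∧ eval ![p.1, p.2, q.1, q.2] F = 0} +
      (4 * F.totalDegree ^ 4 + 2 * m * F.totalDegree) *
        (#A * #B + #C * #D₀ + #A * #C + #A * #D₀ + #B * #C + #B * #D₀) := by
  set δ := F.totalDegree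
  let Z (p q : K × K) : Prop := eval ![p.1, p.2, q.1, q.2] F = 0
  have hT' : ∑ q ∈ C ×ˢ D₀ with q ∈ T', #{p ∈ A ×ˢ B | Z p q} ≤
      4 * δ ^ 4 * (#A * #B) + m * (#C + #D₀) * (δ * (#A + #B)) :=
    (sum_card_filter_eval_fst_le hF hxy _ A B).trans (by gcongr)
  have hS' : ∑ p ∈ A ×ˢ B with p ∈ S', #{q ∈ C ×ˢ D₀ | Z p q} ≤
      4 * δ ^ 4 * (#C * #D₀) + m * (#A + #B) * (δ * (#C + #D₀)) :=
    (sum_card_filter_eval_snd_le hF (Fin.exists_fin_two.2 hst) _ C D₀).trans (by gcongr)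
  calc #{q ∈ A ×ˢ B ×ˢ C ×ˢ D₀ | Z (q.1, q.2.1) q.2.2}
      = #{z ∈ (A ×ˢ B) ×ˢ (C ×ˢ D₀) | Z z.1 z.2} :=
        card_equiv (Equiv.prodAssoc K K (K × K)).symm (by simp [and_assoc])
    _ ≤ ∑ q ∈ C ×ˢ D₀ with q ∉ T', #{p ∈ A ×ˢ B | p ∉ S' ∧ Z p q} +
          (∑ q ∈ C ×ˢ D₀ with q ∈ T', #{p ∈ A ×ˢ B | Z p q} +
            ∑ p ∈ A ×ˢ B with p ∈ S', #{q ∈ C ×ˢ D₀ | Z p q}) :=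
        card_filter_product_le _ _ Z S' T'
    _ ≤ _ := by
        gcongr
        nlinarith [Nat.zero_le (4 * δ ^ 4 * ((#A + #B) * (#C + #D₀))),
          Nat.zero_le (2 * m * δ * (#A * #B + #C * #D₀))]

/-- **Lemma 2.5.** With `Π := (A×B)\𝒮'` and `Γ := {γ_{c,d} : (c,d) ∈ (C×D₀)\𝒯'}`, the number
of points of `Z(F)` in `A×B×C×D₀` is at most the number of incidences `I(Π,Γ)` plus
`c·(|A||B| + |C||D₀| + |A||C| + |A||D₀| + |B||C| + |B||D₀|)`, with `c` depending only
(polynomially) on `δ` and `D`. -/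
theorem zeros_le_incidences_plus_error (δ D : ℕ) :
    ∃ c : ℝ, 0 < c ∧ ∀ F : MvPolynomial (Fin 4) ℂ,
      Irreducible F → F.totalDegree = δ → (∀ i : Fin 4, pderiv i F ≠ 0) →
      ∀ T' S' : Set (ℂ × ℂ), TT F ⊆ T' → SS F ⊆ S' →
        IsCurvePlusPoints T' D (δ ^ 2) → IsCurvePlusPoints S' D (δ ^ 2) →
      ∀ A B C D₀ : Finset ℂ,
        ((((A ×ˢ B ×ˢ C ×ˢ D₀).filter fun q : ℂ × ℂ × ℂ × ℂ =>
            ev4 F q.1 q.2.1 q.2.2.1 q.2.2.2 = 0).card : ℝ) ≤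
          ((∑ q ∈ (C ×ˢ D₀).filter (fun q : ℂ × ℂ => q ∉ T'),
              ((A ×ˢ B).filter fun p : ℂ × ℂ => p ∉ S' ∧ ev4 F p.1 p.2 q.1 q.2 = 0).card : ℕ) : ℝ)
          + c * ((A.card : ℝ) * B.card + (C.card : ℝ) * D₀.card + (A.card : ℝ) * C.card
              + (A.card : ℝ) * D₀.card + (B.card : ℝ) * C.card + (B.card : ℝ) * D₀.card)) := by
  refine ⟨(4 * δ ^ 4 + 2 * (D + δ ^ 2) * δ + 1 : ℕ), by positivity, ?_⟩
  rintro F hF rfl hder T' S' - - hT hS A B C D₀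
  have h := zeros_le_incidences_plus_error_general hF (Or.inl (hder 0)) (Or.inl (hder 2))
    (hT.card_filter_mem_le C D₀) (hS.card_filter_mem_le A B)
  exact_mod_cast h.trans (Nat.add_le_add_left (Nat.mul_le_mul_right _ (Nat.le_succ _)) _)
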